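/- Let $\mathcal{X}_\beta$ be the complete metric space of pairs $(E,\mu)$ where $E \subset \mathbb{T}^d$ is compact, $\mu$ is a Borel probability measure with $\mathrm{supp}(\mu) \subset E$, and $\sup_{\xi\neq 0}|\xi|^{\lambda/2}|\hat\mu(\xi)| < \infty$ for every $\lambda \in [0,\beta)$, topologized by the Hausdorff metric on $E$ and the seminorms $\|\mu\|_{M(\lambda)}$. For every closed cube $Q \subset \mathbb{T}^d$, the set $A(Q) = \{(E,\mu) \in \mathcal{X}_\beta : E \cap Q = \emptyset \text{ or } \mu(Q) > 0\}$ is open and dense in $\mathcal{X}_\beta$. Consequently, for quasi-all (comeager-many) $(E,\mu) \in \mathcal{X}_\beta$, $\mathrm{supp}(\mu) = E$. -/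

import Mathlib

open MeasureTheory Complex

noncomputable section

/-- The `d`-dimensional torus `𝕋^d = ℝ^d/ℤ^d`. -/
abbrev Torus (d : ℕ) := Fin d → AddCircle (1:ℝ)

/-- The character `x ↦ e^{2πi ξ·x}` on the torus, for a frequency `ξ ∈ ℤ^d`. -/
noncomputable def ec {d : ℕ} (ξ : Fin d → ℤ) (x : Torus d) : ℂ :=
  (AddCircle.toCircle (∑ j, ξ j • x j) : ℂ)

/-- The Euclidean norm `|ξ|` of a frequency `ξ ∈ ℤ^d`. -/
noncomputable def znorm {d : ℕ} (ξ : Fin d → ℤ) : ℝ :=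
  Real.sqrt (∑ j, ((ξ j : ℝ))^2)

/-- The Fourier coefficient `μ̂(ξ) = ∫ e^{-2πi ξ·x} dμ(x)` of a measure on the torus. -/
noncomputable def mfc {d : ℕ} (μ : Measure (Torus d)) (ξ : Fin d → ℤ) : ℂ :=
  ∫ x, ec (-ξ) x ∂μ

/-- The canonical projection `ℝ^d → 𝕋^d`. -/
def torusCoe {d : ℕ} (x : Fin d → ℝ) : Torus d := fun j => (x j : AddCircle (1:ℝ))

/-- The (closed) support of a measure on the torus. -/
def msupport {d : ℕ} (μ : Measure (Torus d)) : Set (Torus d) :=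
  {x | ∀ U : Set (Torus d), IsOpen U → x ∈ U → μ U ≠ 0}

/-- A pair `(E, μ)` of a set and a measure on the torus. -/
abbrev PairT (d : ℕ) := Set (Torus d) × Measure (Torus d)

/-- Membership in the space `𝒳_β` : `E` compact, `μ` a probability measure supported in `E`
with `‖μ‖_{M(λ)} < ∞` for every `λ ∈ [0,β)`. -/
def memX {d : ℕ} (β : ℝ) (p : PairT d) : Prop :=
  IsCompact p.1 ∧ IsProbabilityMeasure p.2 ∧ msupport p.2 ⊆ p.1 ∧
    ∀ lam : ℝ, 0 ≤ lam → lam < β → ∃ A : ℝ, ∀ ξ : Fin d → ℤ, ξ ≠ 0 →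
      znorm ξ ^ (lam/2) * ‖mfc p.2 ξ‖ ≤ A

/-- Basic neighbourhood relation in `𝒳_β`: Hausdorff distance of the sets `< ε` and the
`M(λ)`-seminorm of the difference of the measures `< ε`. -/
def closeX {d : ℕ} (lam ε : ℝ) (p q : PairT d) : Prop :=
  Metric.hausdorffDist p.1 q.1 < ε ∧
    ∀ ξ : Fin d → ℤ, ξ ≠ 0 → znorm ξ ^ (lam/2) * ‖mfc p.2 ξ - mfc q.2 ξ‖ < ε

/-- Openness in `𝒳_β` (w.r.t. the basic neighbourhoods `closeX`). -/
def IsOpenX {d : ℕ} (β : ℝ) (S : Set (PairT d)) : Prop :=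
  ∀ p, memX β p → p ∈ S → ∃ ε : ℝ, 0 < ε ∧ ∃ lam : ℝ, 0 ≤ lam ∧ lam < β ∧
    ∀ q, memX β q → closeX lam ε p q → q ∈ S

/-- Density in `𝒳_β`. -/
def IsDenseX {d : ℕ} (β : ℝ) (S : Set (PairT d)) : Prop :=
  ∀ p, memX β p → ∀ ε : ℝ, 0 < ε → ∀ lam : ℝ, 0 ≤ lam → lam < β →
    ∃ q, memX β q ∧ q ∈ S ∧ closeX lam ε p q

/-- A closed (axis-parallel) cube in the torus with positive sidelength `< 1`. -/
def IsClosedCube {d : ℕ} (Q : Set (Torus d)) : Prop :=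
  ∃ (a : Fin d → ℝ) (s : ℝ), 0 < s ∧ s < 1 ∧
    Q = {x | ∀ j, ∃ t : ℝ, a j ≤ t ∧ t ≤ a j + s ∧ x j = (t : AddCircle (1:ℝ))}

/-- The set `A(Q) = {(E,μ) : E ∩ Q = ∅ or μ(Q) > 0}`. -/
def AQ {d : ℕ} (Q : Set (Torus d)) : Set (PairT d) :=
  {p | p.1 ∩ Q = ∅ ∨ 0 < p.2 Q}

/-
If `μ̂` decays, then `μ` vanishes on every hyperplane `x j = c`: after a translation moving it to
`x j = 0`, the hyperplane is mapped into itself by each dilation `x ↦ k • x`, whereas the dilates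
of `μ` converge weakly to Haar measure. So `μ (∂Q) = 0` for every cube `Q`. By Lévy's continuity
theorem, closeness of the Fourier coefficients is closeness in the weak topology, so `μ Q > 0`
persists near `(E, μ)`; that `E ∩ Q = ∅` persists is a compactness argument. For density, one mixes
into `μ` a small multiple of a rapidly decaying measure carried by a small subcube of `Q` near a
point of `E ∩ Q`; an iterated convolution of uniform measures on tiny cubes serves, since each
factor contributes one order of Fourier decay.
-/

open Filter Set Topology

section Characters

variable {d : ℕ}

lemma ec_eq_mFourier (ξ : Fin d → ℤ) : ec ξ = UnitAddTorus.mFourier ξ := by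
  ext x
  have toCircle_sum : AddCircle.toCircle (∑ j, ξ j • x j) = ∏ j, AddCircle.toCircle (ξ j • x j) :=
    map_prod AddCircle.toCircle_addChar.toMonoidHom (fun j => Multiplicative.ofAdd (ξ j • x j)) _
  simp only [ec, toCircle_sum, UnitAddTorus.mFourier, ContinuousMap.coe_mk, fourier_apply]
  exact map_prod Circle.coeHom _ _

lemma continuous_ec (ξ : Fin d → ℤ) : Continuous (ec ξ) :=
  ec_eq_mFourier ξ ▸ (UnitAddTorus.mFourier ξ).continuous

lemma norm_ec (ξ : Fin d → ℤ) (x : Torus d) : ‖ec ξ x‖ = 1 := Circle.norm_coe _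

lemma integrable_ec (μ : Measure (Torus d)) [IsFiniteMeasure μ] (ξ : Fin d → ℤ) :
    Integrable (ec ξ) μ :=
  (continuous_ec ξ).integrable_of_hasCompactSupport (.of_compactSpace _)

lemma ec_add (ξ : Fin d → ℤ) (x y : Torus d) : ec ξ (x + y) = ec ξ x * ec ξ y := by
  simp only [ec, Pi.add_apply, smul_add, Finset.sum_add_distrib, AddCircle.toCircle_add,
    Circle.coe_mul]

lemma ec_nsmul (ξ : Fin d → ℤ) (k : ℕ) (x : Torus d) : ec ξ (k • x) = ec (k • ξ) x := by
  simp only [ec, Pi.smul_apply, smul_assoc, smul_comm (ξ _) k]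

lemma ec_torusCoe (ξ : Fin d → ℤ) (y : Fin d → ℝ) :
    ec ξ (torusCoe y) = ∏ j, cexp ((2 * Real.pi * ξ j * y j : ℝ) * I) := by
  simp only [ec_eq_mFourier, UnitAddTorus.mFourier, ContinuousMap.coe_mk]
  refine Finset.prod_congr rfl fun j _ => ?_
  rw [torusCoe, fourier_coe_apply]
  push_cast
  ring_nf

lemma exists_ec_ne_one {ξ : Fin d → ℤ} (hξ : ξ ≠ 0) : ∃ y : Torus d, ec ξ y ≠ 1 := by
  by_contra! eq_one
  have mFourier_eq : UnitAddTorus.mFourier ξ = UnitAddTorus.mFourier 0 := by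
    ext x
    rw [← ec_eq_mFourier, eq_one, UnitAddTorus.mFourier_zero, ContinuousMap.one_apply]
  have orthonormal := UnitAddTorus.orthonormal_mFourier (d := Fin d)
  exact hξ (orthonormal.linearIndependent.injective
    (by simp only [UnitAddTorus.mFourierLp, mFourier_eq]))

end Characters

section FourierCoefficients

variable {d : ℕ}

lemma mfc_zero (μ : Measure (Torus d)) [IsProbabilityMeasure μ] : mfc μ 0 = 1 := by
  simp [mfc, ec]

lemma norm_mfc_le_one (μ : Measure (Torus d)) [IsProbabilityMeasure μ] (ξ : Fin d → ℤ) :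
    ‖mfc μ ξ‖ ≤ 1 := by
  simpa [mfc] using norm_integral_le_of_norm_le_const (μ := μ) (.of_forall fun x =>
    (norm_ec (-ξ) x).le)

lemma mfc_add (μ ν : Measure (Torus d)) [IsFiniteMeasure μ] [IsFiniteMeasure ν] (ξ : Fin d → ℤ) :
    mfc (μ + ν) ξ = mfc μ ξ + mfc ν ξ :=
  integral_add_measure (integrable_ec μ _) (integrable_ec ν _)

lemma mfc_nnreal_smul (c : NNReal) (μ : Measure (Torus d)) (ξ : Fin d → ℤ) :
    mfc (c • μ) ξ = c * mfc μ ξ := by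
  rw [mfc, integral_smul_nnreal_measure, NNReal.smul_def, Complex.real_smul, mfc]

lemma mfc_map_add_right (μ : Measure (Torus d)) (y : Torus d) (ξ : Fin d → ℤ) :
    mfc (μ.map (· + y)) ξ = mfc μ ξ * ec (-ξ) y := by
  simp only [mfc, integral_map (measurable_add_const y).aemeasurable
    (continuous_ec _).aestronglyMeasurable, ec_add, integral_mul_const]

lemma mfc_map_nsmul (μ : Measure (Torus d)) (k : ℕ) (ξ : Fin d → ℤ) :
    mfc (μ.map (k • ·)) ξ = mfc μ (k • ξ) := by
  have measurable_nsmul : Measurable (fun x : Torus d => k • x) := by fun_prop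
  simp only [mfc, integral_map measurable_nsmul.aemeasurable
    (continuous_ec _).aestronglyMeasurable, ec_nsmul, smul_neg]

lemma mfc_conv (μ ν : Measure (Torus d)) [IsFiniteMeasure μ] [IsFiniteMeasure ν]
    (ξ : Fin d → ℤ) : mfc (μ ∗ ν) ξ = mfc μ ξ * mfc ν ξ := by
  simp only [mfc, integral_conv (integrable_ec (μ ∗ ν) (-ξ)), ec_add, integral_const_mul,
    integral_mul_const]

lemma mfc_eq_zero_of_isAddRightInvariant (μ : Measure (Torus d)) [μ.IsAddRightInvariant]
    {ξ : Fin d → ℤ} (hξ : ξ ≠ 0) : mfc μ ξ = 0 := by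
  obtain ⟨y, hy⟩ := exists_ec_ne_one (neg_ne_zero.2 hξ)
  have mul_eq_self := mfc_map_add_right μ y ξ
  rw [map_add_right_eq_self] at mul_eq_self
  exact (mul_right_eq_self₀.1 mul_eq_self.symm).resolve_left hy

lemma separatesPoints_map_comap_toContinuousMapStarₐ {X : Type*} [TopologicalSpace X]
    [CompactSpace X] {A : StarSubalgebra ℂ C(X, ℂ)} (hA : A.SeparatesPoints) :
    ((A.comap (BoundedContinuousFunction.toContinuousMapStarₐ ℂ)).map
      (BoundedContinuousFunction.toContinuousMapStarₐ ℂ)).SeparatesPoints := by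
  intro x y hxy
  obtain ⟨-, ⟨f, hf, rfl⟩, hfxy⟩ := hA hxy
  exact ⟨f, ⟨f, ⟨.mkOfCompact f, hf, rfl⟩, rfl⟩, hfxy⟩

theorem tendsto_of_tendsto_mfc {ι : Type*} {l : Filter ι} {μ : ι → ProbabilityMeasure (Torus d)}
    {μ₀ : ProbabilityMeasure (Torus d)}
    (h : ∀ ξ, Tendsto (fun i => mfc (μ i : Measure (Torus d)) ξ) l
      (𝓝 (mfc (μ₀ : Measure (Torus d)) ξ))) :
    Tendsto μ l (𝓝 μ₀) := by
  have tendsto_trigPoly : ∀ g ∈ Submodule.span ℂ (range (UnitAddTorus.mFourier (d := Fin d))),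
      Tendsto (fun i => ∫ x, g x ∂(μ i : Measure (Torus d))) l (𝓝 (∫ x, g x ∂μ₀)) := by
    have integrable (f : C(Torus d, ℂ)) (ν : ProbabilityMeasure (Torus d)) : Integrable f ν :=
      f.continuous.integrable_of_hasCompactSupport (.of_compactSpace _)
    intro g hg
    induction hg using Submodule.span_induction with
    | mem g hg =>
      obtain ⟨ξ, rfl⟩ := hg
      simpa only [mfc, neg_neg, ec_eq_mFourier] using h (-ξ)
    | zero => simpa using tendsto_const_nhds
    | add f g _ _ hf hg =>
      simpa only [ContinuousMap.add_apply, integral_add (integrable f _) (integrable g _)]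
        using hf.add hg
    | smul c f _ hf =>
      simpa only [ContinuousMap.smul_apply, integral_smul] using hf.const_smul c
  refine ProbabilityMeasure.tendsto_of_tight_of_separatesPoints ℂ .of_compactSpace
    (A := (UnitAddTorus.mFourierSubalgebra (Fin d)).comap
      (BoundedContinuousFunction.toContinuousMapStarₐ ℂ)) ?_ fun g hg => ?_
  · exact separatesPoints_map_comap_toContinuousMapStarₐ
      UnitAddTorus.mFourierSubalgebra_separatesPoints
  · refine tendsto_trigPoly g.toContinuousMap ?_
    rw [← UnitAddTorus.mFourierSubalgebra_coe]
    exact hg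

end FourierCoefficients

section FrequencyNorm

variable {d : ℕ}

lemma znorm_nonneg (ξ : Fin d → ℤ) : 0 ≤ znorm ξ := Real.sqrt_nonneg _

lemma abs_apply_le_znorm (ξ : Fin d → ℤ) (j : Fin d) : |(ξ j : ℝ)| ≤ znorm ξ :=
  Real.abs_le_sqrt <| Finset.single_le_sum (f := fun j => (ξ j : ℝ) ^ 2)
    (fun _ _ => sq_nonneg _) (Finset.mem_univ j)

lemma one_le_znorm {ξ : Fin d → ℤ} (hξ : ξ ≠ 0) : 1 ≤ znorm ξ := by
  obtain ⟨j, hj⟩ := Function.ne_iff.1 hξ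
  exact le_trans (mod_cast Int.one_le_abs hj) (abs_apply_le_znorm ξ j)

lemma znorm_le_sum_abs (ξ : Fin d → ℤ) : znorm ξ ≤ ∑ j, |(ξ j : ℝ)| := by
  refine Real.sqrt_le_iff.2 ⟨by positivity, ?_⟩
  simpa only [sq_abs] using Finset.sum_sq_le_sq_sum_of_nonneg (fun j _ => abs_nonneg (ξ j : ℝ))

lemma znorm_nsmul (k : ℕ) (ξ : Fin d → ℤ) : znorm (k • ξ) = k * znorm ξ := by
  simp only [znorm, Pi.smul_apply, nsmul_eq_mul, Int.cast_mul, Int.cast_natCast, mul_pow,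
    ← Finset.mul_sum]
  rw [Real.sqrt_mul (by positivity), Real.sqrt_sq k.cast_nonneg]

end FrequencyNorm

/-- The measure `μ` has Fourier decay of order `s` if `μ̂(ξ) = O(|ξ|⁻ˢ)`; for `s = λ / 2` this is
the finiteness of `‖μ‖_{M(λ)}`. -/
def HasFourierDecay {d : ℕ} (μ : Measure (Torus d)) (s : ℝ) : Prop :=
  ∃ A : ℝ, ∀ ξ : Fin d → ℤ, ξ ≠ 0 → znorm ξ ^ s * ‖mfc μ ξ‖ ≤ A

namespace HasFourierDecay

variable {d : ℕ} {μ ν : Measure (Torus d)} {s t : ℝ}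

lemma mono (hμ : HasFourierDecay μ t) (hst : s ≤ t) : HasFourierDecay μ s := by
  obtain ⟨A, hA⟩ := hμ
  refine ⟨A, fun ξ hξ => le_trans ?_ (hA ξ hξ)⟩
  gcongr
  exact one_le_znorm hξ

lemma add [IsFiniteMeasure μ] [IsFiniteMeasure ν] (hμ : HasFourierDecay μ s)
    (hν : HasFourierDecay ν s) : HasFourierDecay (μ + ν) s := by
  obtain ⟨A, hA⟩ := hμ
  obtain ⟨B, hB⟩ := hν
  refine ⟨A + B, fun ξ hξ => ?_⟩
  calc znorm ξ ^ s * ‖mfc (μ + ν) ξ‖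
      ≤ znorm ξ ^ s * (‖mfc μ ξ‖ + ‖mfc ν ξ‖) := by
        rw [mfc_add]
        gcongr
        · exact Real.rpow_nonneg (znorm_nonneg ξ) s
        · exact norm_add_le _ _
    _ ≤ A + B := by rw [mul_add]; exact add_le_add (hA ξ hξ) (hB ξ hξ)

lemma nnreal_smul (hμ : HasFourierDecay μ s) (c : NNReal) : HasFourierDecay (c • μ) s := by
  obtain ⟨A, hA⟩ := hμ
  refine ⟨c * A, fun ξ hξ => ?_⟩
  rw [mfc_nnreal_smul, norm_mul, Complex.norm_real, NNReal.norm_eq, mul_left_comm]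
  exact mul_le_mul_of_nonneg_left (hA ξ hξ) c.2

lemma conv [IsFiniteMeasure μ] [IsFiniteMeasure ν] (hμ : HasFourierDecay μ s)
    (hν : HasFourierDecay ν t) : HasFourierDecay (μ ∗ ν) (s + t) := by
  obtain ⟨A, hA⟩ := hμ
  obtain ⟨B, hB⟩ := hν
  refine ⟨A * B, fun ξ hξ => ?_⟩
  have znorm_pos : 0 < znorm ξ := zero_lt_one.trans_le (one_le_znorm hξ)
  calc znorm ξ ^ (s + t) * ‖mfc (μ ∗ ν) ξ‖
      = (znorm ξ ^ s * ‖mfc μ ξ‖) * (znorm ξ ^ t * ‖mfc ν ξ‖) := by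
        rw [mfc_conv, norm_mul, Real.rpow_add znorm_pos]
        ring
    _ ≤ A * B := mul_le_mul (hA ξ hξ) (hB ξ hξ) (by positivity)
        (le_trans (by positivity) (hA ξ hξ))

lemma tendsto_mfc_nsmul (hμ : HasFourierDecay μ s) (hs : 0 < s) {ξ : Fin d → ℤ} (hξ : ξ ≠ 0) :
    Tendsto (fun k : ℕ => mfc μ (k • ξ)) atTop (𝓝 0) := by
  obtain ⟨A, hA⟩ := hμ
  have tendsto_norm : Tendsto (fun k : ℕ => znorm (k • ξ)) atTop atTop := by
    simp only [znorm_nsmul]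
    exact tendsto_natCast_atTop_atTop.atTop_mul_const (zero_lt_one.trans_le (one_le_znorm hξ))
  have tendsto_bound : Tendsto (fun k : ℕ => A / znorm (k • ξ) ^ s) atTop (𝓝 0) :=
    ((tendsto_rpow_atTop hs).comp tendsto_norm).const_div_atTop A
  refine squeeze_zero_norm' ?_ tendsto_bound
  filter_upwards [eventually_gt_atTop 0] with k hk
  have nsmul_ne_zero : k • ξ ≠ 0 := smul_ne_zero hk.ne' hξ
  rw [le_div_iff₀' (Real.rpow_pos_of_pos (zero_lt_one.trans_le (one_le_znorm nsmul_ne_zero)) s)]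
  exact hA _ nsmul_ne_zero

end HasFourierDecay

section NullHyperplanes

variable {d : ℕ}

instance isProbabilityMeasure_volume_addCircle :
    IsProbabilityMeasure (volume : Measure (AddCircle (1 : ℝ))) :=
  ⟨by rw [AddCircle.measure_univ, ENNReal.ofReal_one]⟩

lemma volume_hyperplane (j : Fin d) (c : AddCircle (1 : ℝ)) :
    (volume : Measure (Torus d)) {x | x j = c} = 0 := by
  have : NullSingletonClass (volume : Measure (AddCircle (1 : ℝ))) :=
    ⟨fun x => by rw [← Metric.closedBall_zero, AddCircle.volume_closedBall]; simp⟩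
  exact Measure.pi_hyperplane (α := fun _ => AddCircle (1 : ℝ)) (fun _ => volume) j c

theorem tendsto_map_nsmul_volume {μ : ProbabilityMeasure (Torus d)}
    (h : ∀ ξ : Fin d → ℤ, ξ ≠ 0 → Tendsto (fun k : ℕ => mfc (μ : Measure (Torus d)) (k • ξ))
      atTop (𝓝 0)) :
    Tendsto (fun k : ℕ => μ.map (f := fun x => k • x) (by fun_prop)) atTop
      (𝓝 ⟨volume, inferInstance⟩) := by
  refine tendsto_of_tendsto_mfc fun ξ => ?_
  obtain rfl | hξ := eq_or_ne ξ 0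
  · have mfc_volume_zero := mfc_zero (volume : Measure (Torus d))
    simpa only [mfc_zero, ProbabilityMeasure.coe_mk, mfc_volume_zero] using tendsto_const_nhds
  · simpa [mfc_eq_zero_of_isAddRightInvariant _ hξ, mfc_map_nsmul] using h ξ hξ

theorem measure_hyperplane_eq_zero {μ : Measure (Torus d)} [IsProbabilityMeasure μ]
    (h : ∀ ξ : Fin d → ℤ, ξ ≠ 0 → Tendsto (fun k : ℕ => mfc μ (k • ξ)) atTop (𝓝 0))
    (j : Fin d) (c : AddCircle (1 : ℝ)) : μ {x | x j = c} = 0 := by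
  let y : Torus d := fun _ => -c
  let μy : ProbabilityMeasure (Torus d) :=
    ⟨μ.map (· + y), Measure.isProbabilityMeasure_map (by fun_prop)⟩
  have equidistribution := tendsto_map_nsmul_volume (μ := μy) fun ξ hξ => by
    refine squeeze_zero_norm (fun k => ?_) (tendsto_zero_iff_norm_tendsto_zero.1 (h ξ hξ))
    simp [μy, mfc_map_add_right, norm_ec]
  have isClosed_hyperplane : IsClosed {x : Torus d | x j = 0} :=
    isClosed_eq (continuous_apply j) continuous_const
  have le_map (k : ℕ) : μ {x | x j = c} ≤
      (μy.map (f := fun x => k • x) (by fun_prop) : Measure (Torus d)) {x | x j = 0} := by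
    rw [ProbabilityMeasure.toMeasure_map, Measure.map_apply (by fun_prop)
      isClosed_hyperplane.measurableSet, ProbabilityMeasure.coe_mk, Measure.map_apply (by fun_prop)
      (isClosed_hyperplane.measurableSet.preimage (by fun_prop))]
    exact measure_mono fun x (hx : x j = c) => by simp [y, hx]
  refine le_zero_iff.1 ?_
  calc μ {x | x j = c}
      ≤ limsup (fun k : ℕ => (μy.map (f := fun x => k • x) (by fun_prop) :
          Measure (Torus d)) {x | x j = 0}) atTop := le_limsup_of_frequently_le
        (.of_forall le_map)
    _ ≤ (volume : Measure (Torus d)) {x | x j = 0} :=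
        ProbabilityMeasure.limsup_measure_closed_le_of_tendsto equidistribution isClosed_hyperplane
    _ = 0 := volume_hyperplane j 0

end NullHyperplanes

section Boxes

variable {d : ℕ}

lemma continuous_torusCoe : Continuous (torusCoe (d := d)) :=
  continuous_pi fun j => (AddCircle.continuous_mk' 1).comp (continuous_apply j)

lemma isOpenMap_torusCoe : IsOpenMap (torusCoe (d := d)) :=
  IsOpenMap.piMap (fun _ => QuotientAddGroup.isOpenMap_coe)
    (.of_forall fun _ => QuotientAddGroup.mk_surjective)

lemma torusCoe_surjective : Function.Surjective (torusCoe (d := d)) :=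
  Function.Surjective.piMap fun _ => QuotientAddGroup.mk_surjective

lemma torusCoe_add (x y : Fin d → ℝ) : torusCoe (x + y) = torusCoe x + torusCoe y := rfl

lemma dist_torusCoe_le (x y : Fin d → ℝ) : dist (torusCoe x) (torusCoe y) ≤ dist x y := by
  refine (dist_pi_le_iff dist_nonneg).2 fun j => le_trans ?_ (dist_le_pi_dist x y j)
  rw [dist_eq_norm, dist_eq_norm]
  exact QuotientAddGroup.norm_mk_le_norm

lemma isCompact_torusCoe_Icc (a b : Fin d → ℝ) : IsCompact (torusCoe '' Icc a b) :=
  isCompact_Icc.image continuous_torusCoe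

lemma isClosedCube_iff {Q : Set (Torus d)} :
    IsClosedCube Q ↔ ∃ (a : Fin d → ℝ) (s : ℝ), 0 < s ∧ s < 1 ∧
      Q = torusCoe '' Icc a (fun j => a j + s) := by
  have image_eq (a : Fin d → ℝ) (s : ℝ) : torusCoe '' Icc a (fun j => a j + s) =
      {x | ∀ j, ∃ t : ℝ, a j ≤ t ∧ t ≤ a j + s ∧ x j = (t : AddCircle (1 : ℝ))} := by
    ext x
    constructor
    · rintro ⟨y, hy, rfl⟩ j
      exact ⟨y j, hy.1 j, hy.2 j, rfl⟩
    · intro hx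
      choose y hay hys hxy using hx
      exact ⟨y, ⟨hay, hys⟩, (funext hxy).symm⟩
  simp only [IsClosedCube, image_eq]

lemma IsClosedCube.isClosed {Q : Set (Torus d)} (hQ : IsClosedCube Q) : IsClosed Q := by
  obtain ⟨a, s, -, -, rfl⟩ := isClosedCube_iff.1 hQ
  exact (isCompact_torusCoe_Icc _ _).isClosed

lemma frontier_torusCoe_Icc_subset (a b : Fin d → ℝ) :
    frontier (torusCoe '' Icc a b) ⊆ ⋃ j, ({x | x j = (a j : AddCircle (1 : ℝ))} ∪
      {x | x j = (b j : AddCircle (1 : ℝ))}) := by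
  rw [(isCompact_torusCoe_Icc a b).isClosed.frontier_eq]
  rintro - ⟨⟨y, hy, rfl⟩, not_interior⟩
  by_contra not_face
  simp only [mem_iUnion, not_exists, mem_union, not_or] at not_face
  have isOpen_openBox : IsOpen (univ.pi fun j => Ioo (a j) (b j)) :=
    isOpen_set_pi finite_univ fun j _ => isOpen_Ioo
  refine not_interior <| interior_maximal (image_mono ?_) (isOpenMap_torusCoe _ isOpen_openBox)
    ⟨y, fun j _ => ?_, rfl⟩
  · exact fun z hz => ⟨fun j => (hz j trivial).1.le, fun j => (hz j trivial).2.le⟩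
  · exact ⟨(hy.1 j).lt_of_ne fun h => (not_face j).1 (congrArg _ h.symm),
      (hy.2 j).lt_of_ne fun h => (not_face j).2 (congrArg _ h)⟩

theorem measure_frontier_torusCoe_Icc_eq_zero {μ : Measure (Torus d)} [IsProbabilityMeasure μ]
    {s : ℝ} (hμ : HasFourierDecay μ s) (hs : 0 < s) (a b : Fin d → ℝ) :
    μ (frontier (torusCoe '' Icc a b)) = 0 := by
  have hyperplane_null := measure_hyperplane_eq_zero fun ξ hξ => hμ.tendsto_mfc_nsmul hs hξ
  exact measure_mono_null (frontier_torusCoe_Icc_subset a b) <|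
    measure_iUnion_null fun j => measure_union_null (hyperplane_null j _) (hyperplane_null j _)

end Boxes

section Support

variable {d : ℕ} {β : ℝ}

lemma msupport_eq_support (μ : Measure (Torus d)) : msupport μ = μ.support := by
  ext x
  simp only [Measure.support_eq_forall_isOpen, msupport, pos_iff_ne_zero, mem_ofPred]
  exact forall_congr' fun U => ⟨fun h hx hU => h hU hx, fun h hU hx => h hx hU⟩

lemma msupport_subset_iff {μ : Measure (Torus d)} {E : Set (Torus d)} (hE : IsClosed E) :
    msupport μ ⊆ E ↔ μ Eᶜ = 0 := by
  rw [msupport_eq_support]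
  exact ⟨fun h => measure_mono_null (compl_subset_compl.2 h) Measure.measure_compl_support,
    fun h => Measure.support_subset_of_isClosed hE h⟩

lemma memX.nonempty {p : PairT d} (hp : memX β p) : p.1.Nonempty := by
  obtain ⟨-, prob, support_subset, -⟩ := hp
  refine Nonempty.mono support_subset ?_
  rw [msupport_eq_support]
  exact Measure.nonempty_support (IsProbabilityMeasure.ne_zero _)

end Support

section Openness

lemma exists_pos_disjoint_of_hausdorffDist_lt {X : Type*} [PseudoMetricSpace X] {E Q : Set X}
    (hE : IsCompact E) (hE' : E.Nonempty) (hQ : IsClosed Q) (hEQ : Disjoint E Q) :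
    ∃ δ > 0, ∀ F : Set X, F.Nonempty → Bornology.IsBounded F → Metric.hausdorffDist E F < δ →
      Disjoint F Q := by
  obtain ⟨δ, hδ, disjoint_thickening⟩ := hEQ.exists_thickenings hE hQ
  refine ⟨δ, hδ, fun F hF F_bounded hEF => ?_⟩
  refine disjoint_thickening.mono (fun y hy => ?_) (Metric.self_subset_thickening hδ Q)
  obtain ⟨x, hx, hxy⟩ := Metric.exists_dist_lt_of_hausdorffDist_lt' hy hEF
    (Metric.hausdorffEDist_ne_top_of_nonempty_of_bounded hE' hF hE.isBounded F_bounded)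
  exact Metric.mem_thickening_iff.2 ⟨x, hx, by rwa [dist_comm]⟩

variable {d : ℕ} {β : ℝ}

theorem exists_pos_measure_pos_of_mfc_close {μ : Measure (Torus d)}
    [μ_prob : IsProbabilityMeasure μ] {Q : Set (Torus d)} (hQ : μ (frontier Q) = 0)
    (hμQ : 0 < μ Q) : ∃ ε > 0, ∀ ν : Measure (Torus d), IsProbabilityMeasure ν →
      (∀ ξ ≠ 0, ‖mfc μ ξ - mfc ν ξ‖ < ε) → 0 < ν Q := by
  by_contra! counterexample
  choose ν ν_prob ν_close ν_null using fun n : ℕ =>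
    counterexample (1 / (n + 1)) Nat.one_div_pos_of_nat
  have tendsto_mfc (ξ : Fin d → ℤ) : Tendsto (fun n => mfc (ν n) ξ) atTop (𝓝 (mfc μ ξ)) := by
    obtain rfl | hξ := eq_or_ne ξ 0
    · simpa only [mfc_zero] using tendsto_const_nhds
    · refine tendsto_iff_norm_sub_tendsto_zero.2 <| squeeze_zero (fun _ => norm_nonneg _)
        (fun n => ?_) tendsto_one_div_add_atTop_nhds_zero_nat
      rw [norm_sub_rev]
      exact (ν_close n ξ hξ).le
  have tendsto_measure : Tendsto (fun n => ν n Q) atTop (𝓝 (μ Q)) :=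
    ProbabilityMeasure.tendsto_measure_of_null_frontier_of_tendsto'
      (tendsto_of_tendsto_mfc (μ := fun n => ⟨ν n, ν_prob n⟩) (μ₀ := ⟨μ, μ_prob⟩) tendsto_mfc) hQ
  simp only [le_zero_iff.1 (ν_null _)] at tendsto_measure
  exact hμQ.ne (tendsto_nhds_unique tendsto_const_nhds tendsto_measure)

theorem isOpenX_AQ (hβ : 0 < β) {Q : Set (Torus d)} (hQ : IsClosedCube Q) :
    IsOpenX β (AQ Q) := by
  rintro p hp (disjoint | mass_pos)
  · obtain ⟨δ, hδ, disjoint_of_close⟩ := exists_pos_disjoint_of_hausdorffDist_lt hp.1 hp.nonempty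
      hQ.isClosed (disjoint_iff_inter_eq_empty.2 disjoint)
    exact ⟨δ, hδ, 0, le_rfl, hβ, fun q hq hpq => .inl <| disjoint_iff_inter_eq_empty.1 <|
      disjoint_of_close q.1 hq.nonempty hq.1.isBounded hpq.1⟩
  · have := hp.2.1
    have decay : HasFourierDecay p.2 (β / 2 / 2) :=
      hp.2.2.2 (β / 2) (half_pos hβ).le (half_lt_self hβ)
    obtain ⟨a, r, -, -, rfl⟩ := isClosedCube_iff.1 hQ
    have frontier_null := measure_frontier_torusCoe_Icc_eq_zero decay (half_pos (half_pos hβ))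
      a (fun j => a j + r)
    obtain ⟨ε, hε, mass_pos_of_close⟩ := exists_pos_measure_pos_of_mfc_close frontier_null mass_pos
    exact ⟨ε, hε, 0, le_rfl, hβ, fun q hq hpq => .inr <| mass_pos_of_close q.2 hq.2.1 fun ξ hξ => by
      simpa using hpq.2 ξ hξ⟩

end Openness

section RapidDecay

variable {d : ℕ}

lemma abs_mul_norm_integral_cexp_le (θ : ℝ) :
    |θ| * ‖∫ u in (0 : ℝ)..1, cexp ((θ * u : ℝ) * I)‖ ≤ 2 := by
  obtain rfl | hθ := eq_or_ne θ 0
  · simp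
  have integral_eq : ∫ u in (0 : ℝ)..1, cexp ((θ * u : ℝ) * I) = (cexp (θ * I) - 1) / (θ * I) := by
    have integral_exp := integral_exp_mul_complex (a := 0) (b := 1) (c := θ * I)
      (mul_ne_zero (ofReal_ne_zero.2 hθ) I_ne_zero)
    simpa [mul_right_comm] using integral_exp
  have norm_sub_le : ‖cexp (θ * I) - 1‖ ≤ 1 + 1 := by
    simpa [norm_exp_ofReal_mul_I] using norm_sub_le (cexp (θ * I)) 1
  rw [integral_eq, norm_div, norm_mul, norm_I, mul_one, norm_real, Real.norm_eq_abs,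
    mul_div_cancel₀ _ (abs_ne_zero.2 hθ)]
  linarith

/-- The uniform probability measure on the box `[0, δ]ᵈ` of the torus (wrapped around when
`δ > 1`), encoded as the image of the volume of the unit cube. -/
def uniformCube (d : ℕ) (δ : ℝ) : Measure (Torus d) :=
  (volume : Measure (Fin d → unitInterval)).map fun u => torusCoe fun j => δ * u j

lemma continuous_scaledCube (δ : ℝ) :
    Continuous fun u : Fin d → unitInterval => torusCoe fun j => δ * u j :=
  continuous_torusCoe.comp (by fun_prop)

instance isProbabilityMeasure_uniformCube (δ : ℝ) : IsProbabilityMeasure (uniformCube d δ) :=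
  Measure.isProbabilityMeasure_map (continuous_scaledCube δ).aemeasurable

lemma uniformCube_compl {δ : ℝ} (hδ : 0 ≤ δ) :
    uniformCube d δ (torusCoe '' Icc 0 fun _ => δ)ᶜ = 0 := by
  rw [uniformCube, Measure.map_apply (continuous_scaledCube δ).measurable
    (isCompact_torusCoe_Icc _ _).isClosed.measurableSet.compl, preimage_compl]
  have preimage_eq : (fun u : Fin d → unitInterval => torusCoe fun j => δ * (u j : ℝ)) ⁻¹'
      (torusCoe '' Icc 0 fun _ => δ) = univ := eq_univ_of_forall fun u => mem_image_of_mem _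
    ⟨fun j => mul_nonneg hδ (u j).2.1, fun j => mul_le_of_le_one_right hδ (u j).2.2⟩
  rw [preimage_eq, compl_univ, measure_empty]

lemma mfc_uniformCube (δ : ℝ) (ξ : Fin d → ℤ) :
    mfc (uniformCube d δ) ξ =
      ∏ j, ∫ u in (0 : ℝ)..1, cexp ((-(2 * Real.pi * δ * ξ j) * u : ℝ) * I) := by
  rw [mfc, uniformCube, integral_map (continuous_scaledCube δ).aemeasurable
    (continuous_ec _).aestronglyMeasurable]
  simp only [ec_torusCoe]
  rw [integral_fintype_prod_volume_eq_prod
    (f := fun j (u : unitInterval) => cexp ((2 * Real.pi * (-ξ) j * (δ * u) : ℝ) * I))]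
  refine Finset.prod_congr rfl fun j _ => ?_
  rw [intervalIntegral.integral_of_le zero_le_one, ← integral_Icc_eq_integral_Ioc,
    ← integral_subtype measurableSet_Icc
      (fun u => cexp ((-(2 * Real.pi * δ * ξ j) * u : ℝ) * I))]
  refine integral_congr_ae (.of_forall fun u => ?_)
  simp only [Pi.neg_apply, Int.cast_neg]
  ring_nf

lemma abs_apply_mul_norm_mfc_uniformCube_le {δ : ℝ} (hδ : 0 < δ) (ξ : Fin d → ℤ) (j : Fin d) :
    |(ξ j : ℝ)| * ‖mfc (uniformCube d δ) ξ‖ ≤ 1 / (Real.pi * δ) := by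
  have norm_factor_le_one (i : Fin d) :
      ‖∫ u in (0 : ℝ)..1, cexp ((-(2 * Real.pi * δ * ξ i) * u : ℝ) * I)‖ ≤ 1 := by
    simpa using intervalIntegral.norm_integral_le_of_norm_le_const (a := 0) (b := 1) (C := 1)
      fun u _ => (norm_exp_ofReal_mul_I (-(2 * Real.pi * δ * ξ i) * u)).le
  have norm_mfc_le : ‖mfc (uniformCube d δ) ξ‖ ≤
      ‖∫ u in (0 : ℝ)..1, cexp ((-(2 * Real.pi * δ * ξ j) * u : ℝ) * I)‖ := by
    rw [mfc_uniformCube, ← Finset.mul_prod_erase _ _ (Finset.mem_univ j), norm_mul, norm_prod]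
    exact mul_le_of_le_one_right (norm_nonneg _)
      (Finset.prod_le_one (fun _ _ => norm_nonneg _) fun i _ => norm_factor_le_one i)
  have decay := abs_mul_norm_integral_cexp_le (-(2 * Real.pi * δ * ξ j))
  rw [abs_neg, abs_mul, abs_of_pos (by positivity : 0 < 2 * Real.pi * δ)] at decay
  rw [le_div_iff₀ (by positivity)]
  nlinarith [mul_le_mul_of_nonneg_left norm_mfc_le (by positivity : 0 ≤ Real.pi * δ * |(ξ j : ℝ)|)]

lemma hasFourierDecay_uniformCube {δ : ℝ} (hδ : 0 < δ) : HasFourierDecay (uniformCube d δ) 1 := by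
  refine ⟨∑ _ : Fin d, 1 / (Real.pi * δ), fun ξ _ => ?_⟩
  calc znorm ξ ^ (1 : ℝ) * ‖mfc (uniformCube d δ) ξ‖
      ≤ (∑ j, |(ξ j : ℝ)|) * ‖mfc (uniformCube d δ) ξ‖ := by
        rw [Real.rpow_one]
        gcongr
        exact znorm_le_sum_abs ξ
    _ ≤ ∑ _ : Fin d, 1 / (Real.pi * δ) := by
        rw [Finset.sum_mul]
        exact Finset.sum_le_sum fun j _ => abs_apply_mul_norm_mfc_uniformCube_le hδ ξ j

lemma conv_compl_eq_zero {M : Type*} [AddMonoid M] [MeasurableSpace M] [MeasurableAdd₂ M]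
    {μ ν : Measure M} {A B C : Set M} (hμ : μ Aᶜ = 0) (hν : ν Bᶜ = 0) (hC : MeasurableSet C)
    (hABC : ∀ x ∈ A, ∀ y ∈ B, x + y ∈ C) : (μ ∗ ν) Cᶜ = 0 := by
  rw [Measure.conv, Measure.map_apply (by fun_prop) hC.compl]
  have hA : ∀ᵐ p ∂μ.prod ν, p.1 ∈ A := Measure.quasiMeasurePreserving_fst.ae hμ
  have hB : ∀ᵐ p ∂μ.prod ν, p.2 ∈ B := Measure.quasiMeasurePreserving_snd.ae hν
  have add_mem : ∀ᵐ p ∂μ.prod ν, p.1 + p.2 ∈ C := by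
    filter_upwards [hA, hB] with p hpA hpB using hABC _ hpA _ hpB
  exact add_mem

theorem exists_isProbabilityMeasure_hasFourierDecay (c : Fin d → ℝ) (N : ℕ) :
    ∀ η > 0, ∃ ν : Measure (Torus d), IsProbabilityMeasure ν ∧
      ν (torusCoe '' Icc c (fun j => c j + η))ᶜ = 0 ∧ HasFourierDecay ν N := by
  induction N with
  | zero =>
    intro η hη
    refine ⟨.dirac (torusCoe c), inferInstance, ?_, 1, fun ξ _ => ?_⟩
    · have mem_image : torusCoe c ∈ torusCoe '' Icc c (fun j => c j + η) :=
        mem_image_of_mem _ ⟨le_rfl, fun j => le_add_of_nonneg_right hη.le⟩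
      rw [Measure.dirac_apply' _ (isCompact_torusCoe_Icc _ _).isClosed.measurableSet.compl,
        indicator_of_notMem (notMem_compl_iff.2 mem_image)]
    · simpa using norm_mfc_le_one _ ξ
  | succ N ih =>
    intro η hη
    obtain ⟨ν, ν_prob, ν_conc, ν_decay⟩ := ih (η / 2) (half_pos hη)
    refine ⟨ν ∗ uniformCube d (η / 2), inferInstance, ?_, ?_⟩
    · refine conv_compl_eq_zero ν_conc (uniformCube_compl (half_pos hη).le)
        (isCompact_torusCoe_Icc _ _).isClosed.measurableSet ?_
      rintro - ⟨x, hx, rfl⟩ - ⟨y, hy, rfl⟩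
      refine ⟨x + y, ⟨fun j => ?_, fun j => ?_⟩, torusCoe_add x y⟩
      · exact le_add_of_le_of_nonneg (hx.1 j) (hy.1 j)
      · linarith [hx.2 j, hy.2 j, Pi.add_apply x y j]
    · exact_mod_cast ν_decay.conv (hasFourierDecay_uniformCube (half_pos hη))

end RapidDecay

section Mixture

variable {X : Type*} [MeasurableSpace X] {μ ν : Measure X}

/-- The convex combination `p ν + (1 - p) μ`, which mixes a proportion `p` of `ν` into `μ`. -/
def mixture (p : unitInterval) (ν μ : Measure X) : Measure X :=
  unitInterval.toNNReal p • ν + unitInterval.toNNReal (unitInterval.symm p) • μ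

instance isProbabilityMeasure_mixture [IsProbabilityMeasure μ] [IsProbabilityMeasure ν]
    (p : unitInterval) : IsProbabilityMeasure (mixture p ν μ) := by
  unfold mixture; infer_instance

lemma mixture_apply_eq_zero {A : Set X} (p : unitInterval) (hν : ν A = 0) (hμ : μ A = 0) :
    mixture p ν μ A = 0 := by
  simp [mixture, hμ, hν]

lemma mixture_apply_pos {A : Set X} {p : unitInterval} (hp : 0 < p) (hA : 0 < ν A) :
    0 < mixture p ν μ A := by
  have toNNReal_ne_zero : unitInterval.toNNReal p ≠ 0 := by
    simpa [← NNReal.coe_ne_zero] using hp.ne'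
  simp [mixture, toNNReal_ne_zero, hA.ne', pos_iff_ne_zero]

end Mixture

section Density

variable {d : ℕ}

lemma IsClosedCube.exists_subcube {Q : Set (Torus d)} (hQ : IsClosedCube Q) {x : Torus d}
    (hx : x ∈ Q) {ε : ℝ} (hε : 0 < ε) : ∃ (c : Fin d → ℝ) (η : ℝ), 0 < η ∧
      torusCoe '' Icc c (fun j => c j + η) ⊆ Q ∩ Metric.closedBall x ε := by
  obtain ⟨a, s, hs, -, rfl⟩ := isClosedCube_iff.1 hQ
  obtain ⟨t, ht, rfl⟩ := hx
  refine ⟨fun j => max (a j) (t j - min s ε), min s ε, lt_min hs hε, ?_⟩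
  rintro - ⟨y, ⟨le_y, y_le⟩, rfl⟩
  have min_le_s := min_le_left s ε
  have min_le_ε := min_le_right s ε
  have lower (j) : a j ≤ y j ∧ t j - min s ε ≤ y j := max_le_iff.1 (le_y j)
  have upper (j) : y j ≤ max (a j + min s ε) (t j) :=
    (y_le j).trans_eq ((max_add_add_right _ _ _).symm.trans (by rw [sub_add_cancel]))
  refine ⟨mem_image_of_mem _ ⟨fun j => (lower j).1, fun j => (upper j).trans ?_⟩, ?_⟩
  · exact max_le (by linarith) (ht.2 j)
  · refine (dist_torusCoe_le y t).trans ((dist_pi_le_iff hε.le).2 fun j => ?_)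
    have y_le_t_add : y j ≤ t j + min s ε :=
      (upper j).trans (max_le (by gcongr; exact ht.1 j) (by linarith [lt_min hs hε]))
    rw [Real.dist_eq, abs_le]
    constructor <;> linarith [(lower j).2]

theorem IsClosedCube.exists_hasFourierDecay {Q : Set (Torus d)} (hQ : IsClosedCube Q)
    {x : Torus d} (hx : x ∈ Q) {ε : ℝ} (hε : 0 < ε) (s : ℝ) :
    ∃ (K : Set (Torus d)) (ν : Measure (Torus d)), IsCompact K ∧ K ⊆ Q ∩ Metric.closedBall x ε ∧
      IsProbabilityMeasure ν ∧ ν Kᶜ = 0 ∧ HasFourierDecay ν s := by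
  obtain ⟨c, η, hη, subset⟩ := hQ.exists_subcube hx hε
  obtain ⟨ν, ν_prob, ν_conc, ν_decay⟩ := exists_isProbabilityMeasure_hasFourierDecay c ⌈s⌉₊ η hη
  exact ⟨_, ν, isCompact_torusCoe_Icc _ _, subset, ν_prob, ν_conc, ν_decay.mono (Nat.le_ceil s)⟩

lemma hausdorffDist_union_le {X : Type*} [PseudoMetricSpace X] {E K : Set X} {x : X} {r : ℝ}
    (hr : 0 ≤ r) (hx : x ∈ E) (hK : K ⊆ Metric.closedBall x r) :
    Metric.hausdorffDist E (E ∪ K) ≤ r := by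
  refine Metric.hausdorffDist_le_of_mem_dist hr
    (fun y hy => ⟨y, .inl hy, (dist_self y).trans_le hr⟩) ?_
  rintro y (hy | hy)
  · exact ⟨y, hy, (dist_self y).trans_le hr⟩
  · exact ⟨x, hx, hK hy⟩

variable {μ ν : Measure (Torus d)}

lemma HasFourierDecay.mixture [IsFiniteMeasure μ] [IsFiniteMeasure ν] {s : ℝ}
    (hν : HasFourierDecay ν s) (hμ : HasFourierDecay μ s) (p : unitInterval) :
    HasFourierDecay (mixture p ν μ) s :=
  (hν.nnreal_smul _).add (hμ.nnreal_smul _)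

lemma mfc_sub_mfc_mixture [IsFiniteMeasure μ] [IsFiniteMeasure ν] (p : unitInterval)
    (ξ : Fin d → ℤ) : mfc μ ξ - mfc (mixture p ν μ) ξ = (p : ℝ) * (mfc μ ξ - mfc ν ξ) := by
  rw [mixture, mfc_add, mfc_nnreal_smul, mfc_nnreal_smul]
  simp only [unitInterval.coe_toNNReal, unitInterval.coe_symm_eq, ofReal_sub, ofReal_one]
  ring

theorem exists_mixture_mfc_close [IsFiniteMeasure μ] [IsFiniteMeasure ν] {s : ℝ}
    (hμ : HasFourierDecay μ s) (hν : HasFourierDecay ν s) {ε : ℝ} (hε : 0 < ε) :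
    ∃ p : unitInterval, 0 < p ∧
      ∀ ξ ≠ 0, znorm ξ ^ s * ‖mfc μ ξ - mfc (mixture p ν μ) ξ‖ < ε := by
  obtain ⟨A, hA⟩ := hμ
  obtain ⟨B, hB⟩ := hν
  obtain ⟨r, hr, mul_lt⟩ := exists_pos_mul_lt hε (A + B)
  have min_pos : 0 < min r 1 := lt_min hr one_pos
  refine ⟨⟨min r 1, min_pos.le, min_le_right r 1⟩, min_pos, fun ξ hξ => ?_⟩
  have rpow_nonneg : 0 ≤ znorm ξ ^ s := Real.rpow_nonneg (znorm_nonneg ξ) s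
  calc znorm ξ ^ s * ‖mfc μ ξ - mfc (mixture _ ν μ) ξ‖
      = znorm ξ ^ s * ‖mfc μ ξ - mfc ν ξ‖ * min r 1 := by
        rw [mfc_sub_mfc_mixture, norm_mul, norm_real, Real.norm_of_nonneg min_pos.le]
        ring
    _ ≤ znorm ξ ^ s * (‖mfc μ ξ‖ + ‖mfc ν ξ‖) * r := by
        gcongr
        · exact norm_sub_le _ _
        · exact min_le_left r 1
    _ ≤ (A + B) * r := by
        rw [mul_add]
        gcongr
        exacts [hA ξ hξ, hB ξ hξ]
    _ < ε := mul_lt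

lemma closeX_self {lam ε : ℝ} (hε : 0 < ε) (p : PairT d) : closeX lam ε p p := by
  simp [closeX, Metric.hausdorffDist_self_zero, hε]

lemma memX.union_mixture {β : ℝ} {E K : Set (Torus d)} (hEμ : memX β (E, μ)) (hK : IsCompact K)
    [IsProbabilityMeasure ν] (hνK : ν Kᶜ = 0) (hν : HasFourierDecay ν (β / 2)) (p : unitInterval) :
    memX β (E ∪ K, mixture p ν μ) := by
  obtain ⟨hE, μ_prob, support_subset, μ_decay⟩ := hEμ
  refine ⟨hE.union hK, isProbabilityMeasure_mixture p, ?_, fun lam hlam hlamβ => ?_⟩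
  · rw [msupport_subset_iff hE.isClosed] at support_subset
    rw [msupport_subset_iff (hE.union hK).isClosed]
    exact mixture_apply_eq_zero p
      (measure_mono_null (compl_subset_compl.2 subset_union_right) hνK)
      (measure_mono_null (compl_subset_compl.2 subset_union_left) support_subset)
  · exact (hν.mono (by linarith)).mixture (μ_decay lam hlam hlamβ) p

theorem isDenseX_AQ (β : ℝ) {Q : Set (Torus d)} (hQ : IsClosedCube Q) : IsDenseX β (AQ Q) := by
  rintro ⟨E, μ⟩ hEμ ε hε lam hlam hlamβ
  obtain disjoint | ⟨x, hxE, hxQ⟩ := (E ∩ Q).eq_empty_or_nonempty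
  · exact ⟨(E, μ), hEμ, .inl disjoint, closeX_self hε _⟩
  obtain ⟨K, ν, hK, K_subset, ν_prob, ν_conc, ν_decay⟩ :=
    hQ.exists_hasFourierDecay hxQ (half_pos hε) (β / 2)
  have μ_prob := hEμ.2.1
  have mass_K : 0 < ν K := by
    rw [(prob_compl_eq_zero_iff hK.isClosed.measurableSet).1 ν_conc]
    exact one_pos
  obtain ⟨p, hp, mfc_close⟩ := exists_mixture_mfc_close (hEμ.2.2.2 lam hlam hlamβ)
    (ν_decay.mono (by linarith)) hε
  refine ⟨(E ∪ K, mixture p ν μ), hEμ.union_mixture hK ν_conc ν_decay p, .inr ?_, ?_, mfc_close⟩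
  · exact mixture_apply_pos hp <| mass_K.trans_le <| measure_mono fun y hy => (K_subset hy).1
  · exact (hausdorffDist_union_le (half_pos hε).le hxE fun y hy => (K_subset hy).2).trans_lt
      (half_lt_self hε)

end Density

section Residual

variable {d : ℕ}

/-- The cubes with rational lower corner `z.1` and side `1 / (z.2 + 2)`, a countable family
containing arbitrarily small cubes around every point; the shift by `2` keeps the side below `1`. -/
def rationalCube (z : (Fin d → ℚ) × ℕ) : Set (Torus d) :=
  torusCoe '' Icc (fun j => (z.1 j : ℝ)) fun j => z.1 j + 1 / (z.2 + 2)

lemma isClosedCube_rationalCube (z : (Fin d → ℚ) × ℕ) : IsClosedCube (rationalCube z) := by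
  refine isClosedCube_iff.2 ⟨_, _, by positivity, ?_, rfl⟩
  rw [div_lt_one (by positivity)]
  linarith [z.2.cast_nonneg (α := ℝ)]

lemma exists_rationalCube_subset {U : Set (Torus d)} (hU : IsOpen U) {x : Torus d} (hx : x ∈ U) :
    ∃ z, x ∈ rationalCube z ∧ rationalCube z ⊆ U := by
  obtain ⟨t, rfl⟩ := torusCoe_surjective x
  obtain ⟨ε, hε, ball_subset⟩ := Metric.isOpen_iff.1 (hU.preimage continuous_torusCoe) t hx
  obtain ⟨n, hn⟩ := exists_nat_one_div_lt hε
  have side_lt : 1 / ((n : ℝ) + 2) < ε := lt_of_le_of_lt (by gcongr; norm_num) hn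
  have side_pos : 0 < 1 / ((n : ℝ) + 2) := by positivity
  choose q hq using fun j => exists_rat_btwn (sub_lt_self (t j) side_pos)
  refine ⟨(q, n), ⟨t, ⟨fun j => (hq j).2.le, fun j => ?_⟩, rfl⟩, ?_⟩
  · linarith [(hq j).1]
  · rintro - ⟨y, ⟨le_y, y_le⟩, rfl⟩
    refine ball_subset ((dist_pi_lt_iff hε).2 fun j => ?_)
    rw [Real.dist_eq, abs_lt]
    constructor <;> linarith [(hq j).1, (hq j).2, le_y j, y_le j]

theorem subset_msupport_of_forall_rationalCube {p : PairT d} (h : ∀ z, p ∈ AQ (rationalCube z)) :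
    p.1 ⊆ msupport p.2 := by
  intro x hx U hU hxU
  obtain ⟨z, hxz, subset⟩ := exists_rationalCube_subset hU hxU
  have mass_pos := (h z).resolve_left (Set.Nonempty.ne_empty ⟨x, hx, hxz⟩)
  exact (mass_pos.trans_le (measure_mono subset)).ne'

end Residual

theorem stmt13_general (d : ℕ) (β : ℝ) (hβ0 : 0 < β) :
    (∀ Q : Set (Torus d), IsClosedCube Q → IsOpenX β (AQ Q) ∧ IsDenseX β (AQ Q)) ∧
    ∃ S : ℕ → Set (PairT d), (∀ n, IsOpenX β (S n) ∧ IsDenseX β (S n)) ∧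
      ∀ p : PairT d, memX β p → (∀ n, p ∈ S n) → msupport p.2 = p.1 := by
  have open_dense (Q : Set (Torus d)) (hQ : IsClosedCube Q) :
      IsOpenX β (AQ Q) ∧ IsDenseX β (AQ Q) := ⟨isOpenX_AQ hβ0 hQ, isDenseX_AQ β hQ⟩
  obtain ⟨z, z_surjective⟩ := exists_surjective_nat ((Fin d → ℚ) × ℕ)
  refine ⟨open_dense, fun n => AQ (rationalCube (z n)),
    fun n => open_dense _ (isClosedCube_rationalCube _), fun p hp mem_AQ => ?_⟩
  exact hp.2.2.1.antisymm <|
    subset_msupport_of_forall_rationalCube <| z_surjective.forall.2 mem_AQ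

/-- For every closed cube `Q ⊆ 𝕋^d`, the set `A(Q)` is open and dense in
`𝒳_β`; consequently, the set `{(E,μ) ∈ 𝒳_β : supp(μ) = E}` is comeager, i.e. contains a
countable intersection of open dense sets. -/
theorem stmt13 (d : ℕ) (hd : 0 < d) (β : ℝ) (hβ0 : 0 < β) (hβd : β ≤ d) :
    (∀ Q : Set (Torus d), IsClosedCube Q → IsOpenX β (AQ Q) ∧ IsDenseX β (AQ Q)) ∧
    ∃ S : ℕ → Set (PairT d), (∀ n, IsOpenX β (S n) ∧ IsDenseX β (S n)) ∧
      ∀ p : PairT d, memX β p → (∀ n, p ∈ S n) → msupport p.2 = p.1 :=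
  stmt13_general d β hβ0
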